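/- For all natural numbers n ≥ 1 and real parameters a, b, x (with nonzero denominators), the Jacobi polynomials satisfy P_n^{(a−1,b+1)}(x) = (1/(n+1))·(P_{n+1}^{(a,b)})'(x) − (4(b+1+n)/((2n+2+a+b)(2n+a+b)))·(P_n^{(a,b)})'(x) + (4(b+1+n)(b+n)n/((2n+a+b−1)(2n+a+b+1)(2n+a+b)²))·(P_{n-1}^{(a,b)})'(x). -/

import Mathlib

/-- Rising factorial `(a)_k = a(a+1)⋯(a+k-1)`. -/
noncomputable def rf (a : ℝ) (k : ℕ) : ℝ := ∏ j ∈ Finset.range k, (a + j)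

/-- Monic Jacobi polynomials
`P_n^{(a,b)}(x) = ((a+1)_n 2^n / (n+a+b+1)_n) ∑_{k=0}^n
  ((-n)_k (n+a+b+1)_k / ((a+1)_k k!)) ((1-x)/2)^k`. -/
noncomputable def jacobi (a b : ℝ) (n : ℕ) (x : ℝ) : ℝ :=
  rf (a + 1) n * 2 ^ n / rf ((n : ℝ) + a + b + 1) n *
    ∑ k ∈ Finset.range (n + 1),
      rf (-(n : ℝ)) k * rf ((n : ℝ) + a + b + 1) k / (rf (a + 1) k * (k.factorial : ℝ)) *
        ((1 - x) / 2) ^ k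

/-- Derivative of the monic Jacobi polynomial with respect to `x`. -/
noncomputable def jacobiDeriv (a b : ℝ) (n : ℕ) (x : ℝ) : ℝ := deriv (jacobi a b n) x

theorem rf_succ (a : ℝ) (k : ℕ) : rf a (k + 1) = rf a k * (a + k) :=
  Finset.prod_range_succ _ _

theorem rf_succ' (a : ℝ) (k : ℕ) : rf a (k + 1) = a * rf (a + 1) k := by
  simp only [rf, Finset.prod_range_succ']
  push_cast
  rw [mul_comm]
  congr 1
  · ring
  · exact Finset.prod_congr rfl fun _ _ => by ring

theorem rf_neg_eq_zero {n k : ℕ} (h : n < k) : rf (-(n : ℝ)) k = 0 :=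
  Finset.prod_eq_zero (Finset.mem_range.2 h) (by ring)

/-- Coefficient of `((1 - x) / 2) ^ k` in the monic Jacobi polynomial of degree `n`. -/
noncomputable def jacobiCoeff (a b : ℝ) (n k : ℕ) : ℝ :=
  rf (a + 1) n * 2 ^ n / rf ((n : ℝ) + a + b + 1) n *
    (rf (-(n : ℝ)) k * rf ((n : ℝ) + a + b + 1) k / (rf (a + 1) k * (k.factorial : ℝ)))

theorem jacobi_eq_sum (a b : ℝ) {n N : ℕ} (h : n ≤ N) (x : ℝ) :
    jacobi a b n x =
      ∑ k ∈ Finset.range (N + 1), jacobiCoeff a b n k * ((1 - x) / 2) ^ k := by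
  rw [jacobi, Finset.mul_sum]
  simp only [jacobiCoeff, mul_assoc]
  refine Finset.sum_subset (Finset.range_mono (by omega)) fun k _ hk => ?_
  rw [rf_neg_eq_zero (by simpa using hk)]
  simp

theorem jacobiDeriv_eq_sum (a b : ℝ) {n N : ℕ} (h : n ≤ N) (x : ℝ) :
    jacobiDeriv a b n x =
      ∑ k ∈ Finset.range N,
        -((k : ℝ) + 1) / 2 * jacobiCoeff a b n (k + 1) * ((1 - x) / 2) ^ k := by
  have hf : jacobi a b n = fun y => ∑ k ∈ Finset.range (N + 1),
      jacobiCoeff a b n k * ((1 - y) / 2) ^ k := funext (jacobi_eq_sum a b h)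
  have hy : HasDerivAt (fun y : ℝ => (1 - y) / 2) (-1 / 2) x :=
    ((hasDerivAt_id x).const_sub 1).div_const 2
  have hd := HasDerivAt.fun_sum (u := Finset.range (N + 1)) fun k _ =>
    (hy.pow k).const_mul (jacobiCoeff a b n k)
  rw [jacobiDeriv, hf]
  refine hd.deriv.trans ?_
  rw [Finset.sum_range_succ']
  simp only [Nat.cast_zero, zero_mul, mul_zero, add_zero]
  refine Finset.sum_congr rfl fun k _ => ?_
  push_cast
  ring

theorem jacobiCoeff_parameter_shift (m k : ℕ) (hk : k ≤ m + 1) (a b : ℝ)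
    (hpoch1 : ∀ k ≤ m + 2, rf (a + 1) k ≠ 0)
    (hpoch1' : ∀ k ≤ m + 1, rf a k ≠ 0)
    (hpoch2 : ∀ j ≤ m + 2, rf ((j : ℝ) + a + b + 1) j ≠ 0)
    (h1 : 2 * (m : ℝ) + 2 + a + b ≠ 0) (h2 : 2 * (m : ℝ) + 3 + a + b ≠ 0)
    (h3 : 2 * (m : ℝ) + 1 + a + b ≠ 0) (h4 : 2 * (m : ℝ) + 4 + a + b ≠ 0) :
    jacobiCoeff (a - 1) (b + 1) (m + 1) k =
      -((k : ℝ) + 1) / 2 *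
        (1 / ((m : ℝ) + 2) * jacobiCoeff a b (m + 2) (k + 1) -
          4 * (b + 2 + m) / ((2 * m + 4 + a + b) * (2 * m + 2 + a + b)) *
            jacobiCoeff a b (m + 1) (k + 1) +
          4 * (b + 2 + m) * (b + m + 1) * (m + 1) /
              ((2 * m + 1 + a + b) * (2 * m + 3 + a + b) * (2 * m + 2 + a + b) ^ 2) *
            jacobiCoeff a b m (k + 1)) := by
  have hm1 : (m : ℝ) + 1 ≠ 0 := by positivity
  have h1' : 2 * ((m : ℝ) + 1) + a + b ≠ 0 := by convert h1 using 1; ring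
  set t : ℝ := m + a + b + 2 with ht
  have e0 : ((m + 1 : ℕ) : ℝ) + (a - 1) + (b + 1) + 1 = t := by push_cast; ring
  have e1 : ((m + 1 : ℕ) : ℝ) + a + b + 1 = t := by push_cast; ring
  have e2 : ((m + 2 : ℕ) : ℝ) + a + b + 1 = t + 1 := by push_cast; ring
  have e3 : (m : ℝ) + a + b + 1 = t - 1 := by rw [ht]; ring
  have n1 := hpoch2 (m + 1) (by omega)
  have n3 := hpoch2 m (by omega)
  rw [e1] at n1
  rw [e3] at n3
  have hA := hpoch1 (m + 1) (by omega)
  have hAk := hpoch1 k (by omega)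
  have hAk1 := hpoch1 (k + 1) (by omega)
  have hak1 : a + 1 + k ≠ 0 := fun h => hAk1 (by rw [rf_succ, h, mul_zero])
  have ham : a + 1 + m ≠ 0 := fun h => hA (by rw [rf_succ, h, mul_zero])
  have ha : a ≠ 0 := fun h => hpoch1' (m + 1) le_rfl (by rw [rf_succ', h, zero_mul])
  have ht0 : t ≠ 0 := fun h => n1 (by rw [rf_succ', h, zero_mul])
  have hak : a + k ≠ 0 := fun h => by
    have := rf_succ' a k
    rw [rf_succ, h, mul_zero] at this
    exact mul_ne_zero ha hAk this.symm
  -- Express every rising factorial through those with base points `a + 1`, `-(m + 1)` and `t`.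
  have A1 : rf a k = a * rf (a + 1) k / (a + k) := by
    rw [eq_div_iff hak, ← rf_succ, rf_succ']
  have N1 : rf (-((m + 2 : ℕ) : ℝ)) (k + 1) = -((m : ℝ) + 2) * rf (-((m + 1 : ℕ) : ℝ)) k := by
    rw [rf_succ']; push_cast; congr 2; ring
  have N2 : rf (-(m : ℝ)) (k + 1) =
      rf (-((m + 1 : ℕ) : ℝ)) k * (k - (m + 1)) * (k - m) / -((m : ℝ) + 1) := by
    rw [eq_div_iff (neg_ne_zero.2 hm1)]
    have h := rf_succ' (-((m + 1 : ℕ) : ℝ)) (k + 1)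
    rw [rf_succ, rf_succ, show -((m + 1 : ℕ) : ℝ) + 1 = -(m : ℝ) by push_cast; ring] at h
    push_cast at h ⊢
    linear_combination -h
  have T1 : ∀ j : ℕ, rf (t + 1) j = rf t j * (t + j) / t := fun j => by
    rw [eq_div_iff ht0, ← rf_succ, rf_succ', mul_comm]
  have T2 : rf (t - 1) (k + 1) = (t - 1) * rf t k := by
    rw [rf_succ', sub_add_cancel]
  have T3 : (t - 1) * rf t (m + 1) = rf (t - 1) m * (2 * m + 1 + a + b) * (2 * m + 2 + a + b) := by
    have h := rf_succ' (t - 1) (m + 1)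
    rw [sub_add_cancel, rf_succ, rf_succ] at h
    rw [← h, ht]
    push_cast
    ring
  have ht1 : t - 1 ≠ 0 := fun h =>
    mul_ne_zero (mul_ne_zero n3 h3) h1 (by rw [← T3, h, zero_mul])
  have T4 : rf (t - 1) m = (t - 1) * rf t (m + 1) /
      ((2 * m + 1 + a + b) * (2 * m + 2 + a + b)) := by
    rw [T3]; field_simp
  have s1 : t + ((m + 1 : ℕ) : ℝ) = 2 * m + 3 + a + b := by rw [ht]; push_cast; ring
  have s2 : t + ((m + 2 : ℕ) : ℝ) = 2 * m + 4 + a + b := by rw [ht]; push_cast; ring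
  have D1 : rf (t + 1) (m + 2) =
      rf t (m + 1) * (2 * m + 3 + a + b) * (2 * m + 4 + a + b) / t := by
    rw [T1, rf_succ, s1, s2]
  simp only [jacobiCoeff, e0, e1, e2, e3, sub_add_cancel]
  rw [D1, T4, T2, T1 (k + 1), N1, N2, A1, rf_succ' a m, rf_succ t k, rf_succ (a + 1) k,
    rf_succ (a + 1) (m + 1), rf_succ (a + 1) m, rf_succ (-((m + 1 : ℕ) : ℝ)) k, Nat.factorial_succ]
  push_cast
  rw [pow_succ, pow_succ]
  field_simp
  rw [ht]
  ring

theorem jacobi_parameter_shift_ba (n : ℕ) (hn : 1 ≤ n) (a b x : ℝ)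
    (hpoch1 : ∀ k ≤ n + 1, rf (a + 1) k ≠ 0)
    (hpoch1' : ∀ k ≤ n, rf a k ≠ 0)
    (hpoch2 : ∀ m ≤ n + 1, rf ((m : ℝ) + a + b + 1) m ≠ 0)
    (h1 : 2 * (n : ℝ) + a + b ≠ 0) (h2 : 2 * (n : ℝ) + a + b + 1 ≠ 0)
    (h3 : 2 * (n : ℝ) + a + b - 1 ≠ 0) (h4 : 2 * (n : ℝ) + 2 + a + b ≠ 0) :
    jacobi (a - 1) (b + 1) n x =
      (1 / ((n : ℝ) + 1)) * jacobiDeriv a b (n + 1) x -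
        (4 * (b + 1 + n) / ((2 * n + 2 + a + b) * (2 * n + a + b))) *
          jacobiDeriv a b n x +
        (4 * (b + 1 + n) * (b + n) * n /
            ((2 * n + a + b - 1) * (2 * n + a + b + 1) * (2 * n + a + b) ^ 2)) *
          jacobiDeriv a b (n - 1) x := by
  obtain ⟨m, rfl⟩ : ∃ m, n = m + 1 := ⟨n - 1, by omega⟩
  rw [Nat.add_sub_cancel, jacobi_eq_sum _ _ le_rfl, jacobiDeriv_eq_sum a b le_rfl,
    jacobiDeriv_eq_sum a b (show m + 1 ≤ m + 1 + 1 by omega),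
    jacobiDeriv_eq_sum a b (show m ≤ m + 1 + 1 by omega), Finset.mul_sum, Finset.mul_sum,
    Finset.mul_sum, ← Finset.sum_sub_distrib, ← Finset.sum_add_distrib]
  push_cast at h1 h2 h3 h4 ⊢
  refine Finset.sum_congr rfl fun k hk => ?_
  rw [jacobiCoeff_parameter_shift m k (by have := Finset.mem_range.1 hk; omega) a b hpoch1 hpoch1'
    hpoch2 (by convert h1 using 1; ring) (by convert h2 using 1; ring)
    (by convert h3 using 1; ring) (by convert h4 using 1; ring)]
  ring_nf
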